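/- The quasi-consecutive patterns 2̲1̲3̲4 and 1̲3̲2̲4 are des-Wilf-equivalent: for all n ≥ 1 and k ≥ 0, the number of permutations of length n avoiding 2̲1̲3̲4 with exactly k descents equals the number of permutations of length n avoiding 1̲3̲2̲4 with exactly k descents. -/

import Mathlib

open scoped Classical

/-- The number of descents of a permutation of `Fin n` (one-line notation `π 0, π 1, …`). -/
def des {n : ℕ} (π : Equiv.Perm (Fin n)) : ℕ :=
  (Finset.univ.filter fun i : Fin n =>
    ∃ h : (i : ℕ) + 1 < n, π ⟨(i : ℕ) + 1, h⟩ < π i).card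

/-- `π` avoids the quasi-consecutive pattern 2̲1̲3̲4: there are no (0-indexed) positions
`i` and `j` with `i + 3 ≤ j < n` such that π_{i+1} < π_i < π_{i+2} < π_j. -/
def AvoidsA {n : ℕ} (π : Equiv.Perm (Fin n)) : Prop :=
  ¬ ∃ (i j : ℕ) (hj : j < n) (hij : i + 3 ≤ j), π ⟨i + 1, by omega⟩ < π ⟨i, by omega⟩ ∧ π ⟨i, by omega⟩ < π ⟨i + 2, by omega⟩ ∧ π ⟨i + 2, by omega⟩ < π ⟨j, hj⟩

/-- `π` avoids the quasi-consecutive pattern 1̲3̲2̲4: there are no (0-indexed) positions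
`i` and `j` with `i + 3 ≤ j < n` such that π_i < π_{i+2} < π_{i+1} < π_j. -/
def AvoidsB {n : ℕ} (π : Equiv.Perm (Fin n)) : Prop :=
  ¬ ∃ (i j : ℕ) (hj : j < n) (hij : i + 3 ≤ j), π ⟨i, by omega⟩ < π ⟨i + 2, by omega⟩ ∧ π ⟨i + 2, by omega⟩ < π ⟨i + 1, by omega⟩ ∧ π ⟨i + 1, by omega⟩ < π ⟨j, hj⟩

/-! Cut a permutation after each of its right-to-left maxima, so that every block is a word `L`
followed by a letter `m` larger than all letters of `L` and all letters after the block. A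
consecutive pattern inside `L` is always completed to a quasi-consecutive one by `m`, and no other
occurrence of the quasi-consecutive pattern is possible. Hence the permutation avoids `2̲1̲3̲4`
exactly when none of the words `L` contains `213` consecutively. Reversing and complementing each
`L` within its own set of letters turns `213` into `132`, keeps the right-to-left maxima, and
preserves descents. -/

section Patterns

variable {α : Type*}

/-- Consecutive containment: some factor of the word `l` has the property `P`. A pattern is encoded
as the property of being order-isomorphic to it. -/
def ContainsConsecutive (P : List α → Prop) (l : List α) : Prop :=
  ∃ w, w <:+: l ∧ P w

/-- Quasi-consecutive containment, for the pattern `P` extended by a new largest letter: some factor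
of the word `l` has the property `P` and is followed, not necessarily at once, by a letter exceeding
all of its letters. -/
def ContainsQuasiConsecutive [LT α] (P : List α → Prop) (l : List α) : Prop :=
  ∃ t w s, l = t ++ w ++ s ∧ P w ∧ ∃ d ∈ s, ∀ x ∈ w, x < d

/-- The pattern of three letters `a`, `b`, `c` (in this order) satisfying `r a b c`. -/
def ThreeLetterPattern (r : α → α → α → Prop) (w : List α) : Prop :=
  ∃ a b c, w = [a, b, c] ∧ r a b c

/-- The patterns `P` and `Q` correspond to each other under reversal followed by any
order-reversing substitution of letters. -/
def AreReverseComplements [Preorder α] (P Q : List α → Prop) : Prop :=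
  ∀ (w : List α) (f : α → α), StrictAntiOn f {x | x ∈ w} → (Q (w.map f).reverse ↔ P w)

theorem areReverseComplements_213_132 [LinearOrder α] :
    AreReverseComplements (ThreeLetterPattern fun a b c : α => b < a ∧ a < c)
      (ThreeLetterPattern fun a b c => a < c ∧ c < b) := by
  intro w f hf
  constructor
  · rintro ⟨c, b, a, hw, hca, hab⟩
    simp only [List.reverse_eq_iff, List.map_eq_cons_iff, List.map_eq_nil_iff, List.reverse_cons,
      List.reverse_nil, List.nil_append, List.cons_append] at hw
    obtain ⟨x, _, rfl, rfl, y, _, rfl, rfl, z, _, rfl, rfl, rfl⟩ := hw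
    rw [hf.lt_iff_gt (by simp) (by simp)] at hca hab
    exact ⟨x, y, z, rfl, hab, hca⟩
  · rintro ⟨a, b, c, rfl, hba, hac⟩
    exact ⟨f c, f b, f a, rfl, hf (by simp) (by simp) hac, hf (by simp) (by simp) hba⟩

theorem containsQuasiConsecutive_append_cons [Preorder α] {P : List α → Prop} {L R : List α} {m : α}
    (hL : ∀ x ∈ L, x < m) (hR : ∀ x ∈ R, x ≤ m) :
    ContainsQuasiConsecutive P (L ++ m :: R) ↔
      ContainsConsecutive P L ∨ ContainsQuasiConsecutive P R := by
  constructor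
  · rintro ⟨t, w, s, h, hw, d, hd, hwd⟩
    rcases List.append_eq_append_iff.1 h.symm with ⟨u, rfl, -⟩ | ⟨u, htw, hus⟩
    · exact .inl ⟨w, ⟨t, u, rfl⟩, hw⟩
    rcases List.cons_eq_append_iff.1 hus with ⟨rfl, -⟩ | ⟨u, rfl, rfl⟩
    · exact .inl ⟨w, ⟨t, [], by simpa using htw⟩, hw⟩
    have m_notMem : m ∉ w := fun hm => (hwd m hm).not_ge (hR d (by simp [hd]))
    rcases List.append_eq_append_iff.1 htw with ⟨v, -, rfl⟩ | ⟨v, -, hv⟩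
    · simp at m_notMem
    rcases List.cons_eq_append_iff.1 hv with ⟨-, rfl⟩ | ⟨v, -, rfl⟩
    · simp at m_notMem
    exact .inr ⟨v, w, s, rfl, hw, d, hd, hwd⟩
  · rintro (⟨w, ⟨t, s, rfl⟩, hw⟩ | ⟨t, w, s, rfl, hw, hd⟩)
    · exact ⟨t, w, s ++ m :: R, by simp, hw, m, by simp, fun x hx => hL x (by simp [hx])⟩
    · exact ⟨L ++ m :: t, w, s, by simp, hw, hd⟩

theorem containsQuasiConsecutive_threeLetterPattern_iff [LT α] {r : α → α → α → Prop}
    {l : List α} :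
    ContainsQuasiConsecutive (ThreeLetterPattern r) l ↔
      ∃ (i j : ℕ) (_ : j < l.length) (_ : i + 3 ≤ j),
        r l[i] l[i + 1] l[i + 2] ∧ l[i] < l[j] ∧ l[i + 1] < l[j] ∧ l[i + 2] < l[j] := by
  constructor
  · rintro ⟨t, _, s, rfl, ⟨a, b, c, rfl, hr⟩, d, hd, hlt⟩
    obtain ⟨j, hj, rfl⟩ := List.getElem_of_mem hd
    refine ⟨t.length, t.length + 3 + j, by simp; omega, by omega, ?_⟩
    have hlt : a < s[j] ∧ b < s[j] ∧ c < s[j] := by simpa using hlt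
    simpa [List.getElem_append_right, add_assoc, add_comm 3 j] using ⟨hr, hlt⟩
  · rintro ⟨i, j, hj, hij, hr, hlt⟩
    refine ⟨l.take i, [l[i], l[i + 1], l[i + 2]], l.drop (i + 3), ?_, ⟨_, _, _, rfl, hr⟩, l[j],
      List.mem_drop_iff_getElem.2 ⟨j - (i + 3), by omega, by congr 1; omega⟩, by simpa using hlt⟩
    simp [List.take_append_drop]

end Patterns

section DescentCount

variable {α : Type*} [LinearOrder α]

/-- The number of descents of a word, extending `des` to words with arbitrary letters. -/
def descentCount : List α → ℕ
  | a :: b :: l => (if b < a then 1 else 0) + descentCount (b :: l)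
  | _ => 0

theorem descentCount_ofFn {n : ℕ} (f : Fin n → α) :
    descentCount (List.ofFn f) =
      (Finset.univ.filter fun i : Fin n => ∃ h : (i : ℕ) + 1 < n, f ⟨i + 1, h⟩ < f i).card := by
  induction n with
  | zero => simp [descentCount]
  | succ n ih =>
    cases n with
    | zero =>
      rw [Finset.filter_false_of_mem fun i _ ⟨h, _⟩ => by omega]
      simp [descentCount]
    | succ n =>
      rw [Fin.card_filter_univ_succ']
      simpa [List.ofFn_succ, descentCount] using ih fun i => f i.succ

theorem descentCount_append_cons (l₁ : List α) (a : α) (l₂ : List α) :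
    descentCount (l₁ ++ a :: l₂) = descentCount (l₁ ++ [a]) + descentCount (a :: l₂) := by
  induction l₁ with
  | nil => simp [descentCount]
  | cons b l ih =>
    cases l with
    | nil => simp [descentCount]
    | cons c l =>
      simp only [List.cons_append, descentCount] at ih ⊢
      rw [ih, add_assoc]

theorem descentCount_append_singleton {l : List α} {m : α} (h : ∀ x ∈ l, x ≤ m) :
    descentCount (l ++ [m]) = descentCount l := by
  cases l using List.reverseRecOn with
  | nil => rfl
  | append_singleton l a =>
    have ham : ¬ m < a := (h a (by simp)).not_gt
    simp [descentCount_append_cons l a [m], descentCount, ham]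

theorem descentCount_cons {m : α} {l : List α} (h : ∀ x ∈ l, x < m) :
    descentCount (m :: l) = (if l = [] then 0 else 1) + descentCount l := by
  cases l with
  | nil => rfl
  | cons a l => simp [descentCount, h a]

theorem descentCount_reverse_map {f : α → α} {l : List α} (hf : StrictAntiOn f {x | x ∈ l}) :
    descentCount (l.map f).reverse = descentCount l := by
  induction l with
  | nil => rfl
  | cons a l ih =>
    cases l with
    | nil => rfl
    | cons b l =>
      have hab : f a < f b ↔ b < a := hf.lt_iff_gt (by simp) (by simp)
      have ih := ih (hf.mono fun x hx => List.mem_cons_of_mem a hx)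
      simp only [List.map_cons, List.reverse_cons, List.append_assoc, List.cons_append,
        List.nil_append] at ih ⊢
      rw [descentCount_append_cons, ih]
      simp [descentCount, hab, add_comm]

end DescentCount

section ReverseComplement

variable {α : Type*} [LinearOrder α]

/-- The order-reversing involution of a finite set `S`, extended by the identity outside `S`. -/
def complementOn (S : Finset α) : Equiv.Perm α :=
  Fin.revPerm.extendDomain (S.orderIsoOfFin rfl).toEquiv

theorem complementOn_involutive (S : Finset α) : Function.Involutive (complementOn S) := by
  have h : complementOn S * complementOn S = 1 := by
    have hrev : (Fin.revPerm * Fin.revPerm : Equiv.Perm (Fin S.card)) = 1 := by ext; simp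
    rw [complementOn, Equiv.Perm.extendDomain_mul, hrev, Equiv.Perm.extendDomain_one]
  exact fun x => DFunLike.congr_fun h x

theorem complementOn_mem {S : Finset α} {x : α} (hx : x ∈ S) : complementOn S x ∈ S := by
  rw [complementOn, Equiv.Perm.extendDomain_apply_subtype _ _ hx]
  exact Subtype.property _

theorem complementOn_strictAntiOn (S : Finset α) : StrictAntiOn (complementOn S) S := by
  intro x hx y hy hxy
  rw [complementOn, Equiv.Perm.extendDomain_apply_subtype _ _ hx,
    Equiv.Perm.extendDomain_apply_subtype _ _ hy]
  simpa using hxy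

/-- The reverse-complement of a word, the complement being taken within its own set of letters. -/
def reverseComplement (l : List α) : List α :=
  (l.map (complementOn l.toFinset)).reverse

@[simp]
theorem mem_reverseComplement {l : List α} {x : α} : x ∈ reverseComplement l ↔ x ∈ l := by
  have complement_mem {y : α} (hy : y ∈ l) : complementOn l.toFinset y ∈ l :=
    List.mem_toFinset.1 (complementOn_mem (List.mem_toFinset.2 hy))
  simp only [reverseComplement, List.mem_reverse, List.mem_map]
  constructor
  · rintro ⟨y, hy, rfl⟩
    exact complement_mem hy
  · exact fun hx => ⟨_, complement_mem hx, complementOn_involutive _ x⟩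

@[simp]
theorem length_reverseComplement (l : List α) : (reverseComplement l).length = l.length := by
  simp [reverseComplement]

theorem reverseComplement_involutive :
    Function.Involutive (reverseComplement : List α → List α) := by
  intro l
  have same_letters : (reverseComplement l).toFinset = l.toFinset := by ext; simp
  rw [reverseComplement, same_letters, reverseComplement, List.map_reverse, List.reverse_reverse,
    List.map_map, (complementOn_involutive _).comp_self, List.map_id]

theorem strictAntiOn_complementOn_toFinset (l : List α) :
    StrictAntiOn (complementOn l.toFinset) {x | x ∈ l} := by
  simpa using complementOn_strictAntiOn l.toFinset

theorem descentCount_reverseComplement (l : List α) :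
    descentCount (reverseComplement l) = descentCount l :=
  descentCount_reverse_map (strictAntiOn_complementOn_toFinset l)

theorem containsConsecutive_reverseComplement {P Q : List α → Prop}
    (hPQ : AreReverseComplements P Q) (l : List α) :
    ContainsConsecutive Q (reverseComplement l) ↔ ContainsConsecutive P l := by
  have hanti {w : List α} (hw : w <:+: l) :
      StrictAntiOn (complementOn l.toFinset) {x | x ∈ w} :=
    (strictAntiOn_complementOn_toFinset l).mono fun x hx => hw.subset hx
  constructor
  · rintro ⟨w, hw, hQ⟩
    rw [reverseComplement, ← List.reverse_infix, List.reverse_reverse, List.infix_map_iff] at hw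
    obtain ⟨v, hv, hwv⟩ := hw
    rw [List.reverse_eq_iff] at hwv
    exact ⟨v, hv, (hPQ v _ (hanti hv)).1 (hwv ▸ hQ)⟩
  · rintro ⟨w, hw, hP⟩
    exact ⟨_, List.reverse_infix.2 (hw.map _), (hPQ w _ (hanti hw)).2 hP⟩

end ReverseComplement

section BlockReverseComplement

variable {α : Type*} [LinearOrder α]

/-- Reverse-complement each block of letters preceding a right-to-left maximum, keeping these maxima
fixed. A block is split off at the first occurrence of the maximum of the remaining word. -/
def blockReverseComplement (l : List α) : List α :=
  if h : l = [] then [] else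
    reverseComplement (l.takeWhile (· < l.max h)) ++
      l.max h :: blockReverseComplement (l.dropWhile (· < l.max h)).tail
termination_by l.length
decreasing_by
  have := (List.dropWhile_suffix (l := l) (· < l.max h)).length_le
  have := List.length_pos_iff.2 h
  rw [List.length_tail]
  omega

theorem blockReverseComplement_nil : blockReverseComplement ([] : List α) = [] := by
  rw [blockReverseComplement, dif_pos rfl]

theorem blockReverseComplement_append_cons {L R : List α} {m : α}
    (hL : ∀ x ∈ L, x < m) (hR : ∀ x ∈ R, x ≤ m) :
    blockReverseComplement (L ++ m :: R) =
      reverseComplement L ++ m :: blockReverseComplement R := by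
  have hmax : (L ++ m :: R).max (by simp) = m := by
    rw [List.max_eq_iff]
    refine ⟨by simp, fun x hx => ?_⟩
    simp only [List.mem_append, List.mem_cons] at hx
    rcases hx with hx | rfl | hx
    exacts [(hL x hx).le, le_rfl, hR x hx]
  have hL' : ∀ x ∈ L, decide (x < m) = true := by simpa using hL
  rw [blockReverseComplement, dif_neg (by simp)]
  simp only [hmax, List.takeWhile_append_of_pos hL', List.dropWhile_append_of_pos hL']
  simp

theorem exists_eq_append_max_cons {l : List α} (hl : l ≠ []) :
    ∃ L m R, l = L ++ m :: R ∧ (∀ x ∈ L, x < m) ∧ ∀ x ∈ R, x ≤ m := by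
  obtain ⟨L, R, h, hmL⟩ := List.eq_append_cons_of_mem (List.max_mem hl)
  have le_max {x : α} (hx : x ∈ L ++ l.max hl :: R) : x ≤ l.max hl :=
    List.le_max_of_mem (h ▸ hx)
  refine ⟨L, _, R, h, fun x hx => ?_, fun x hx => le_max (by simp [hx])⟩
  exact (le_max (by simp [hx])).lt_of_ne fun hxm => hmL (hxm ▸ hx)

theorem append_max_cons_induction {motive : List α → Prop} (nil : motive [])
    (append_max_cons : ∀ (L : List α) (m : α) (R : List α), (∀ x ∈ L, x < m) →
      (∀ x ∈ R, x ≤ m) → motive R → motive (L ++ m :: R)) (l : List α) : motive l := by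
  by_cases hl : l = []
  · exact hl ▸ nil
  · obtain ⟨L, m, R, h, hL, hR⟩ := exists_eq_append_max_cons hl
    exact h ▸ append_max_cons L m R hL hR (append_max_cons_induction nil append_max_cons R)
termination_by l.length
decreasing_by simp [h]; omega

@[simp]
theorem mem_blockReverseComplement {l : List α} {x : α} :
    x ∈ blockReverseComplement l ↔ x ∈ l := by
  induction l using append_max_cons_induction with
  | nil => rw [blockReverseComplement_nil]
  | append_max_cons L m R hL hR ih => simp [blockReverseComplement_append_cons hL hR, ih]

@[simp]
theorem length_blockReverseComplement (l : List α) :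
    (blockReverseComplement l).length = l.length := by
  induction l using append_max_cons_induction with
  | nil => rw [blockReverseComplement_nil]
  | append_max_cons L m R hL hR ih => simp [blockReverseComplement_append_cons hL hR, ih]

theorem blockReverseComplement_involutive :
    Function.Involutive (blockReverseComplement : List α → List α) := by
  intro l
  induction l using append_max_cons_induction with
  | nil => simp only [blockReverseComplement_nil]
  | append_max_cons L m R hL hR ih =>
    rw [blockReverseComplement_append_cons hL hR,
      blockReverseComplement_append_cons (by simpa using hL) (by simpa using hR), ih,
      reverseComplement_involutive]

theorem containsQuasiConsecutive_blockReverseComplement {P Q : List α → Prop}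
    (hPQ : AreReverseComplements P Q) (l : List α) :
    ContainsQuasiConsecutive Q (blockReverseComplement l) ↔ ContainsQuasiConsecutive P l := by
  induction l using append_max_cons_induction with
  | nil => simp [blockReverseComplement_nil, ContainsQuasiConsecutive]
  | append_max_cons L m R hL hR ih =>
    rw [blockReverseComplement_append_cons hL hR, containsQuasiConsecutive_append_cons hL hR,
      containsQuasiConsecutive_append_cons (by simpa using hL) (by simpa using hR), ih,
      containsConsecutive_reverseComplement hPQ]

theorem descentCount_blockReverseComplement {l : List α} (hl : l.Nodup) :
    descentCount (blockReverseComplement l) = descentCount l := by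
  induction l using append_max_cons_induction with
  | nil => rw [blockReverseComplement_nil]
  | append_max_cons L m R hL hR ih =>
    obtain ⟨m_notMem, nodup_R⟩ := List.nodup_cons.1 hl.of_append_right
    have hR' : ∀ x ∈ R, x < m := fun x hx => (hR x hx).lt_of_ne fun h => m_notMem (h ▸ hx)
    have isEmpty_iff : blockReverseComplement R = [] ↔ R = [] := by
      simp [← List.length_eq_zero_iff]
    rw [blockReverseComplement_append_cons hL hR, descentCount_append_cons,
      descentCount_append_cons L, descentCount_cons hR', descentCount_cons (by simpa using hR'),
      descentCount_append_singleton fun x hx => (hL x hx).le,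
      descentCount_append_singleton fun x hx => (hL x (by simpa using hx)).le,
      descentCount_reverseComplement, ih nodup_R]
    simp only [isEmpty_iff]

end BlockReverseComplement

theorem exists_perm_ofFn_eq {n : ℕ} {l : List (Fin n)} (hlen : l.length = n) (hmem : ∀ x, x ∈ l) :
    ∃ π : Equiv.Perm (Fin n), List.ofFn π = l := by
  have hsurj : Function.Surjective fun i : Fin n => l.get (i.cast hlen.symm) := by
    intro x
    obtain ⟨i, hi⟩ := List.mem_iff_get.1 (hmem x)
    exact ⟨i.cast hlen, hi⟩
  refine ⟨.ofBijective _ (Finite.surjective_iff_bijective.1 hsurj), ?_⟩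
  exact List.ext_getElem (by simp [hlen]) (by simp)

theorem exists_involutive_ofFn_eq_blockReverseComplement (n : ℕ) :
    ∃ Φ : Equiv.Perm (Fin n) → Equiv.Perm (Fin n), Function.Involutive Φ ∧
      ∀ π, List.ofFn (Φ π) = blockReverseComplement (List.ofFn π) := by
  have exists_image (π : Equiv.Perm (Fin n)) :
      ∃ σ : Equiv.Perm (Fin n), List.ofFn σ = blockReverseComplement (List.ofFn π) :=
    exists_perm_ofFn_eq (by simp) (by simp [List.mem_ofFn, π.surjective _])
  choose Φ hΦ using exists_image
  refine ⟨Φ, fun π => DFunLike.coe_injective (List.ofFn_injective ?_), hΦ⟩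
  rw [hΦ, hΦ, blockReverseComplement_involutive]

theorem avoidsA_iff {n : ℕ} (π : Equiv.Perm (Fin n)) :
    AvoidsA π ↔ ¬ ContainsQuasiConsecutive
      (ThreeLetterPattern fun a b c => b < a ∧ a < c) (List.ofFn π) := by
  rw [AvoidsA, containsQuasiConsecutive_threeLetterPattern_iff, not_iff_not]
  simp only [List.length_ofFn, List.getElem_ofFn]
  constructor
  · rintro ⟨i, j, hj, hij, hba, hac, hcd⟩
    exact ⟨i, j, hj, hij, ⟨hba, hac⟩, hac.trans hcd, hba.trans (hac.trans hcd), hcd⟩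
  · rintro ⟨i, j, hj, hij, ⟨hba, hac⟩, -, -, hcd⟩
    exact ⟨i, j, hj, hij, hba, hac, hcd⟩

theorem avoidsB_iff {n : ℕ} (π : Equiv.Perm (Fin n)) :
    AvoidsB π ↔ ¬ ContainsQuasiConsecutive
      (ThreeLetterPattern fun a b c => a < c ∧ c < b) (List.ofFn π) := by
  rw [AvoidsB, containsQuasiConsecutive_threeLetterPattern_iff, not_iff_not]
  simp only [List.length_ofFn, List.getElem_ofFn]
  constructor
  · rintro ⟨i, j, hj, hij, hac, hcb, hbd⟩
    exact ⟨i, j, hj, hij, ⟨hac, hcb⟩, hac.trans (hcb.trans hbd), hbd, hcb.trans hbd⟩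
  · rintro ⟨i, j, hj, hij, ⟨hac, hcb⟩, -, hbd, -⟩
    exact ⟨i, j, hj, hij, hac, hcb, hbd⟩

theorem statement15_general {n : ℕ} {P Q : List (Fin n) → Prop} (hPQ : AreReverseComplements P Q)
    (k : ℕ) :
    Nat.card {π : Equiv.Perm (Fin n) //
        ¬ ContainsQuasiConsecutive P (List.ofFn π) ∧ des π = k} =
      Nat.card {π : Equiv.Perm (Fin n) //
        ¬ ContainsQuasiConsecutive Q (List.ofFn π) ∧ des π = k} := by
  obtain ⟨Φ, hinv, hΦ⟩ := exists_involutive_ofFn_eq_blockReverseComplement n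
  have hdes (π : Equiv.Perm (Fin n)) : des (Φ π) = des π := by
    have hnodup : (List.ofFn π).Nodup := List.nodup_ofFn.2 π.injective
    rw [des, ← descentCount_ofFn, hΦ, descentCount_blockReverseComplement hnodup,
      descentCount_ofFn, des]
  refine Nat.card_congr ((hinv.toPerm Φ).subtypeEquiv fun π => ?_)
  rw [hinv.coe_toPerm, hdes, hΦ, containsQuasiConsecutive_blockReverseComplement hPQ]

/-- The quasi-consecutive patterns 2̲1̲3̲4 and 1̲3̲2̲4 are des-Wilf-equivalent. -/
theorem statement15 (n : ℕ) (hn : 1 ≤ n) (k : ℕ) :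
    Nat.card {π : Equiv.Perm (Fin n) // AvoidsA π ∧ des π = k} =
      Nat.card {π : Equiv.Perm (Fin n) // AvoidsB π ∧ des π = k} := by
  simp only [avoidsA_iff, avoidsB_iff]
  exact statement15_general areReverseComplements_213_132 k
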